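/- (Theorem 1, property (5), pointwise form) Let n ∈ Im(Ca') with g(n,n) = 1, and let X, Y, Z ∈ Im(Ca') with g(X,n) = g(Y,n) = g(Z,n) = 0. With J X := n×X, the 3-form dω = 3Ω satisfies dω(X, JY, JZ) = −dω(X,Y,Z); explicitly, g(X×(n×Y), n×Z) = −g(X×Y, Z). -/

import Mathlib

-- The split octonion algebra Ca' as pairs of real quaternions.
noncomputable section

abbrev Ca : Type := Quaternion ℝ × Quaternion ℝ

namespace Ca

/-- Split octonion multiplication: (a,b)·(c,d) = (ac + (conj d)b, da + b(conj c)). -/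
def mul (x y : Ca) : Ca :=
  (x.1 * y.1 + star y.2 * x.2, y.2 * x.1 + x.2 * star y.1)

/-- The unit (1,0). -/
def one : Ca := (1, 0)

/-- Conjugation conj(a,b) = (conj a, −b). -/
def conj (x : Ca) : Ca := (star x.1, -x.2)

/-- Real part Re(a,b) = re a. -/
def re (x : Ca) : ℝ := x.1.re

/-- Norm form N(a,b) = ‖a‖² − ‖b‖², of signature (4,4). -/
def N (x : Ca) : ℝ := Quaternion.normSq x.1 - Quaternion.normSq x.2

/-- The symmetric bilinear form ⟨x,y⟩ = (N(x+y) − N(x) − N(y))/2. -/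
def bil (x y : Ca) : ℝ := (N (x + y) - N x - N y) / 2

/-- The vector cross product on Im(Ca'): X × Y := X·Y + g(X,Y)·1. -/
def cross (X Y : Ca) : Ca := mul X Y + bil X Y • one

end Ca

/-
Orthogonality to `n` turns `n × Y` and `n × Z` into the algebra products `nY` and `nZ`. The
identity `conj x · (x · y) = N(x) y`, polarised, says that left multiplications by orthogonal
imaginary elements anticommute, so `X(nY) = -n(XY)`. Finally `g(n(XY), nZ) = N(n) g(XY, Z)`, and the
real part distinguishing `XY` from `X × Y` is invisible to the imaginary `Z`.
-/

open scoped RealInnerProductSpace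

theorem inner_quaternion_mul_left (a b c : Quaternion ℝ) : ⟪a * b, c⟫ = ⟪b, star a * c⟫ := by
  simp only [Quaternion.inner_def, star_mul, star_star, Quaternion.re_mul, Quaternion.imI_mul,
    Quaternion.imJ_mul, Quaternion.imK_mul, Quaternion.re_star, Quaternion.imI_star,
    Quaternion.imJ_star, Quaternion.imK_star]
  ring

theorem inner_quaternion_star_star (a b : Quaternion ℝ) : ⟪star a, star b⟫ = ⟪a, b⟫ := by
  simp only [Quaternion.inner_def, Quaternion.re_mul, Quaternion.re_star, Quaternion.imI_star,
    Quaternion.imJ_star, Quaternion.imK_star]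
  ring

theorem inner_quaternion_mul_right (a b c : Quaternion ℝ) : ⟪a * b, c⟫ = ⟪a, c * star b⟫ := by
  rw [← inner_quaternion_star_star, star_mul, inner_quaternion_mul_left,
    ← inner_quaternion_star_star, star_star, star_mul, star_star, star_star]

namespace Ca

theorem bil_eq_inner_sub_inner (x y : Ca) : bil x y = ⟪x.1, y.1⟫ - ⟪x.2, y.2⟫ := by
  simp only [bil, N, ← Quaternion.inner_self, Prod.fst_add, Prod.snd_add, real_inner_add_add_self]
  ring

theorem bil_self (x : Ca) : bil x x = N x := by
  rw [bil_eq_inner_sub_inner, Quaternion.inner_self, Quaternion.inner_self, N]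

theorem bil_comm (x y : Ca) : bil x y = bil y x := by
  simp only [bil_eq_inner_sub_inner, real_inner_comm]

theorem bil_add_left (x y z : Ca) : bil (x + y) z = bil x z + bil y z := by
  simp only [bil_eq_inner_sub_inner, Prod.fst_add, Prod.snd_add, inner_add_left]
  ring

theorem bil_smul_left (r : ℝ) (x y : Ca) : bil (r • x) y = r * bil x y := by
  simp only [bil_eq_inner_sub_inner, Prod.smul_fst, Prod.smul_snd, real_inner_smul_left, mul_sub]

theorem bil_neg_left (x y : Ca) : bil (-x) y = -bil x y := by
  simpa only [neg_one_smul, neg_one_mul] using bil_smul_left (-1) x y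

theorem bil_one_left (x : Ca) : bil one x = re x := by
  simp [bil_eq_inner_sub_inner, one, re, Quaternion.inner_def]

theorem conj_add (x y : Ca) : conj (x + y) = conj x + conj y := by
  simp only [conj, Prod.fst_add, Prod.snd_add, star_add, neg_add, Prod.mk_add_mk]

theorem conj_eq_neg_of_re_eq_zero {x : Ca} (hx : re x = 0) : conj x = -x :=
  Prod.ext (Quaternion.star_eq_neg.mpr hx) rfl

protected theorem add_mul (x y z : Ca) : mul (x + y) z = mul x z + mul y z := by
  ext1 <;> simp only [mul, Prod.fst_add, Prod.snd_add] <;> noncomm_ring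

protected theorem mul_add (x y z : Ca) : mul x (y + z) = mul x y + mul x z := by
  ext1 <;> simp only [mul, Prod.fst_add, Prod.snd_add, star_add] <;> noncomm_ring

protected theorem neg_mul (x y : Ca) : mul (-x) y = -mul x y := by
  ext1 <;> simp only [mul, Prod.fst_neg, Prod.snd_neg] <;> noncomm_ring

protected theorem mul_one (x : Ca) : mul x one = x := by
  ext1 <;> simp only [mul, one, star_zero, star_one, mul_one, zero_mul, add_zero, zero_add]

theorem conj_mul_mul_self (x y : Ca) : mul (conj x) (mul x y) = N x • y := by
  obtain ⟨a, b⟩ := x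
  obtain ⟨c, d⟩ := y
  ext1
  · calc star a * (a * c + star d * b) + star (d * a + b * star c) * -b
        = star a * a * c - c * (star b * b) := by
          simp only [star_add, star_mul, star_star]; noncomm_ring
      _ = (Quaternion.normSq a - Quaternion.normSq b) • c := by
          simp only [Quaternion.star_mul_self, Quaternion.coe_mul_eq_smul,
            Quaternion.mul_coe_eq_smul, sub_smul]
  · calc (d * a + b * star c) * star a + -b * star (a * c + star d * b)
        = d * (a * star a) - b * star b * d := by
          simp only [star_add, star_mul, star_star]; noncomm_ring
      _ = (Quaternion.normSq a - Quaternion.normSq b) • d := by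
          simp only [Quaternion.self_mul_star, Quaternion.coe_mul_eq_smul,
            Quaternion.mul_coe_eq_smul, sub_smul]

theorem conj_mul_mul_add_conj_mul_mul (x y z : Ca) :
    mul (conj x) (mul y z) + mul (conj y) (mul x z) = (2 * bil x y) • z := by
  have h_add := conj_mul_mul_self (x + y) z
  simp only [conj_add, Ca.add_mul, Ca.mul_add, conj_mul_mul_self] at h_add
  have h_polar : 2 * bil x y = N (x + y) - N x - N y := by rw [bil]; ring
  rw [h_polar, sub_smul, sub_smul, ← h_add]
  abel

theorem mul_mul_eq_neg_mul_mul {x y : Ca} (hx : re x = 0) (hy : re y = 0) (hxy : bil x y = 0)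
    (z : Ca) : mul x (mul y z) = -mul y (mul x z) := by
  have h_sum := conj_mul_mul_add_conj_mul_mul x y z
  rw [conj_eq_neg_of_re_eq_zero hx, conj_eq_neg_of_re_eq_zero hy, Ca.neg_mul, Ca.neg_mul, hxy,
    mul_zero, zero_smul, ← neg_add, neg_eq_zero] at h_sum
  exact eq_neg_of_add_eq_zero_left h_sum

theorem bil_mul_left (x y z : Ca) : bil (mul x y) z = bil y (mul (conj x) z) := by
  obtain ⟨a, b⟩ := x
  obtain ⟨c, d⟩ := y
  obtain ⟨e, f⟩ := z
  have h_db : ⟪star d * b, e⟫ = ⟪d, b * star e⟫ := by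
    rw [inner_quaternion_mul_right, ← inner_quaternion_star_star, star_star, star_mul, star_star]
  have h_bc : ⟪b * star c, f⟫ = ⟪c, star f * b⟫ := by
    rw [inner_quaternion_mul_left, ← inner_quaternion_star_star, star_star, star_mul, star_star]
  simp only [bil_eq_inner_sub_inner, mul, conj, inner_add_left, inner_add_right, mul_neg, neg_mul,
    inner_neg_right, inner_quaternion_mul_left a c e, inner_quaternion_mul_right d a f, h_db, h_bc]
  ring

theorem bil_mul_mul (x y z : Ca) : bil (mul x y) (mul x z) = N x * bil y z := by
  rw [bil_mul_left, conj_mul_mul_self, bil_comm, bil_smul_left, bil_comm]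

theorem re_mul (x y : Ca) : re (mul x y) = bil (conj x) y := by
  rw [← bil_one_left, bil_comm, bil_mul_left, Ca.mul_one, bil_comm]

theorem cross_eq_mul_of_bil_eq_zero {x y : Ca} (hxy : bil x y = 0) : cross x y = mul x y := by
  rw [cross, hxy, zero_smul, add_zero]

theorem bil_cross_eq_bil_mul (x y : Ca) {z : Ca} (hz : re z = 0) :
    bil (cross x y) z = bil (mul x y) z := by
  rw [cross, bil_add_left, bil_smul_left, bil_one_left, hz, mul_zero, add_zero]

end Ca

theorem domega_JJ_general (n X Y Z : Ca)
    (hn : Ca.re n = 0) (hX : Ca.re X = 0) (hZ : Ca.re Z = 0)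
    (hXn : Ca.bil X n = 0) (hYn : Ca.bil Y n = 0) (hZn : Ca.bil Z n = 0) :
    Ca.bil (Ca.cross X (Ca.cross n Y)) (Ca.cross n Z)
      = -(Ca.bil n n * Ca.bil (Ca.cross X Y) Z) := by
  rw [Ca.bil_comm] at hYn hZn
  have h_re : Ca.re (Ca.mul n Z) = 0 := by
    rw [Ca.re_mul, Ca.conj_eq_neg_of_re_eq_zero hn, Ca.bil_neg_left, hZn, neg_zero]
  calc Ca.bil (Ca.cross X (Ca.cross n Y)) (Ca.cross n Z)
      = Ca.bil (Ca.mul X (Ca.mul n Y)) (Ca.mul n Z) := by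
        rw [Ca.cross_eq_mul_of_bil_eq_zero hYn, Ca.cross_eq_mul_of_bil_eq_zero hZn,
          Ca.bil_cross_eq_bil_mul _ _ h_re]
    _ = -Ca.bil (Ca.mul n (Ca.mul X Y)) (Ca.mul n Z) := by
        rw [Ca.mul_mul_eq_neg_mul_mul hX hn hXn, Ca.bil_neg_left]
    _ = -(Ca.bil n n * Ca.bil (Ca.cross X Y) Z) := by
        rw [Ca.bil_mul_mul, Ca.bil_self, Ca.bil_cross_eq_bil_mul X Y hZ]

/-- Theorem 1, property (5): dω(X,JY,JZ) = −dω(X,Y,Z), i.e.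
g(X×(n×Y), n×Z) = −g(X×Y, Z). -/
theorem domega_JJ (n X Y Z : Ca)
    (hn : Ca.re n = 0) (hnn : Ca.bil n n = 1)
    (hX : Ca.re X = 0) (hY : Ca.re Y = 0) (hZ : Ca.re Z = 0)
    (hXn : Ca.bil X n = 0) (hYn : Ca.bil Y n = 0) (hZn : Ca.bil Z n = 0) :
    Ca.bil (Ca.cross X (Ca.cross n Y)) (Ca.cross n Z) = -(Ca.bil (Ca.cross X Y) Z) := by
  rw [domega_JJ_general n X Y Z hn hX hZ hXn hYn hZn, hnn, one_mul]
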